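/- Drop N balls uniformly and independently at random into B bins where B ≥ N + √N or B ≤ N - √N, with N ≥ 1, B ≥ 2. Then for any 0 < ε < 1, the number of singleton bins is at least (1-ε)·N/e^{N/(B-1)} with probability at least 1 - exp(-ε²·N/(2·e^{N/(B-1)})). -/

import Mathlib

open scoped Classical

/-!
Let `I` be the number of singleton bins and put `μ = N / e ^ (N / (B - 1))`. Differentiating
`E[y ^ I]` in `y` marks a singleton bin; removing it together with its ball leaves `N - 1` balls in
`B - 1` bins, so the derivative is `N * (1 - 1 / B) ^ (N - 1)` times the generating function of
that smaller system. Conversely, exposing the number of balls in the bin of the first ball shows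
that the generating function of the full system is at most
`(1 + 1 / (B - 1)) * (1 + y ^ 2) / (2 * y)` times that of the smaller one. At `y = e ^ (-t)` the
last fraction is `cosh t`, and the two facts combine to
`(log E[e ^ (-t * I)])' ≤ -μ * (1 - tanh t)`. Integrating,
`E[e ^ (-t * I)] ≤ e ^ (-μ * (t - log (cosh t))) ≤ e ^ (-μ * (t - t ^ 2 / 2))`, and Markov's
inequality with `t = ε` gives the tail bound.
-/

open Finset PowerSeries
open scoped Nat

section ExponentialGeneratingFunctions

/-- The exponential generating function `∑ w n * X ^ n / n!` of a sequence, used to count placements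
of labelled balls. -/
noncomputable def egf {K : Type*} [Field K] (w : ℕ → K) : K⟦X⟧ :=
  .mk fun n ↦ w n / n !

lemma leibniz_prod {R A ι : Type*} [CommSemiring R] [CommSemiring A] [Algebra R A] [DecidableEq ι]
    (D : Derivation R A A) (s : Finset ι) (f : ι → A) :
    D (∏ i ∈ s, f i) = ∑ j ∈ s, ∏ i ∈ s, Function.update f j (D (f j)) i := by
  induction s using Finset.induction_on with
  | empty => simp
  | insert a s ha ih =>
    have update_of_mem : ∀ j ∈ s, ∏ i ∈ insert a s, Function.update f j (D (f j)) i =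
        f a * ∏ i ∈ s, Function.update f j (D (f j)) i := fun j hj ↦ by
      rw [prod_insert ha, Function.update_of_ne (ne_of_mem_of_not_mem hj ha).symm]
    rw [prod_insert ha, D.leibniz, ih, sum_insert ha, prod_insert ha, Function.update_self,
      prod_update_of_notMem ha, sum_congr rfl update_of_mem, ← mul_sum, smul_eq_mul, smul_eq_mul,
      add_comm, mul_comm (D (f a))]

lemma factorial_succ_mul_coeff_succ {R : Type*} [CommSemiring R] (P : R⟦X⟧) (N : ℕ) :
    ((N + 1)! : R) * coeff (N + 1) P = N ! * coeff N (d⁄dX R P) := by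
  rw [coeff_derivative, Nat.factorial_succ]
  push_cast
  ring

variable {K : Type*} [Field K] [CharZero K]

lemma derivative_egf (w : ℕ → K) : d⁄dX K (egf w) = egf fun n ↦ w (n + 1) := by
  ext n
  rw [coeff_derivative, egf, egf, coeff_mk, coeff_mk, Nat.factorial_succ]
  have := n.factorial_ne_zero
  push_cast
  field_simp

lemma factorial_mul_coeff_egf_mul (w : ℕ → K) (P : K⟦X⟧) (N : ℕ) :
    (N ! : K) * coeff N (egf w * P) =
      ∑ k ∈ range (N + 1), N.choose k * w k * ((N - k)! * coeff (N - k) P) := by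
  rw [coeff_mul, Nat.sum_antidiagonal_eq_sum_range_succ_mk, mul_sum]
  refine sum_congr rfl fun k hk ↦ ?_
  rw [egf, coeff_mk, Nat.cast_choose K (mem_range_succ_iff.1 hk)]
  have := k.factorial_ne_zero
  have := (N - k).factorial_ne_zero
  field_simp

theorem factorial_mul_coeff_prod_egf {ι : Type*} [Fintype ι] [DecidableEq ι] (w : ι → ℕ → K)
    (N : ℕ) :
    (N ! : K) * coeff N (∏ j, egf (w j)) = ∑ f : Fin N → ι, ∏ j, w j #{i | f i = j} := by
  induction N generalizing w with
  | zero => simp [egf, coeff_zero_eq_constantCoeff, ← coeff_zero_eq_constantCoeff_apply]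
  | succ N ih =>
    have first_ball (j : ι) :
        N ! * coeff N (∏ i, Function.update (fun i ↦ egf (w i)) j (d⁄dX K (egf (w j))) i) =
          ∑ f : Fin N → ι, ∏ i, w i #{b | (Fin.cons j f : Fin (N + 1) → ι) b = i} := by
      have update_egf (i : ι) :
          Function.update (fun i ↦ egf (w i)) j (d⁄dX K (egf (w j))) i =
            egf (Function.update w j (fun k ↦ w j (k + 1)) i) := by
        rw [derivative_egf, Function.apply_update (fun _ ↦ egf)]
      rw [prod_congr rfl fun i _ ↦ update_egf i, ih]
      refine sum_congr rfl fun f _ ↦ prod_congr rfl fun i _ ↦ ?_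
      rcases eq_or_ne i j with rfl | hij
      · simp [Fin.card_filter_univ_succ]
      · simp [Fin.card_filter_univ_succ, hij, hij.symm]
    rw [factorial_succ_mul_coeff_succ, leibniz_prod, map_sum, mul_sum,
      sum_congr rfl fun j _ ↦ first_ball j, ← Fintype.sum_prod_type',
      ← (Fin.consEquiv fun _ ↦ ι).sum_comp]
    rfl

lemma hasDerivAt_coeff_mul {P Q : ℝ → ℝ⟦X⟧} {P' Q' : ℝ⟦X⟧} {y : ℝ}
    (hP : ∀ N, HasDerivAt (fun z ↦ coeff N (P z)) (coeff N P') y)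
    (hQ : ∀ N, HasDerivAt (fun z ↦ coeff N (Q z)) (coeff N Q') y) (N : ℕ) :
    HasDerivAt (fun z ↦ coeff N (P z * Q z)) (coeff N (P' * Q y + P y * Q')) y := by
  simp only [map_add, coeff_mul, ← sum_add_distrib]
  exact .fun_sum fun p _ ↦ (hP p.1).mul (hQ p.2)

lemma hasDerivAt_coeff_pow {P : ℝ → ℝ⟦X⟧} {P' : ℝ⟦X⟧} {y : ℝ}
    (hP : ∀ N, HasDerivAt (fun z ↦ coeff N (P z)) (coeff N P') y) (B N : ℕ) :
    HasDerivAt (fun z ↦ coeff N (P z ^ (B + 1))) (coeff N ((B + 1) * (P' * P y ^ B))) y := by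
  induction B generalizing N with
  | zero => simpa using hP N
  | succ B ih =>
    simp only [pow_succ' _ (B + 1)]
    refine (hasDerivAt_coeff_mul hP ih N).congr_deriv (congrArg (coeff N) ?_)
    push_cast
    ring

end ExponentialGeneratingFunctions

section SingletonSum

/-- The number of bins holding exactly one ball when ball `i` is dropped into bin `f i`. -/
def singletonCount {α ι : Type*} [Fintype α] [Fintype ι] [DecidableEq ι] (f : α → ι) : ℕ :=
  #{j | #{i | f i = j} = 1}

/-- The contribution of a bin with `k` balls to `y ^ singletonCount f`. -/
def singletonWeight (y : ℝ) (k : ℕ) : ℝ := if k = 1 then y else 1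

/-- The exponential generating function `exp X - (1 - y) * X` of a single bin. -/
noncomputable def binEgf (y : ℝ) : ℝ⟦X⟧ := egf (singletonWeight y)

/-- The sum of `y ^ singletonCount f` over all placements `f` of `N` balls into `B` bins. -/
def singletonSum (B N : ℕ) (y : ℝ) : ℝ := ∑ f : Fin N → Fin B, y ^ singletonCount f

variable {y : ℝ}

lemma prod_singletonWeight {α ι : Type*} [Fintype α] [Fintype ι] [DecidableEq ι] (y : ℝ)
    (f : α → ι) : ∏ j, singletonWeight y #{i | f i = j} = y ^ singletonCount f := by
  simp only [singletonWeight, singletonCount, prod_ite, prod_const, one_pow, mul_one]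

lemma singletonSum_eq_coeff (B N : ℕ) (y : ℝ) :
    singletonSum B N y = N ! * coeff N (binEgf y ^ B) := by
  have h := factorial_mul_coeff_prod_egf (fun _ : Fin B ↦ singletonWeight y) N
  simp only [prod_singletonWeight, prod_const, card_univ, Fintype.card_fin] at h
  exact h.symm

lemma singletonSum_nonneg (hy : 0 ≤ y) (B N : ℕ) : 0 ≤ singletonSum B N y :=
  sum_nonneg fun _ _ ↦ pow_nonneg hy _

lemma singletonSum_one (B N : ℕ) : singletonSum B N 1 = B ^ N := by
  simp [singletonSum]

lemma singletonSum_succ_eq_sum_first_bin (B N : ℕ) (y : ℝ) :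
    singletonSum (B + 1) N y =
      ∑ k ∈ range (N + 1), N.choose k * singletonWeight y k * singletonSum B (N - k) y := by
  simp only [singletonSum_eq_coeff, pow_succ' _ B]
  exact factorial_mul_coeff_egf_mul _ _ N

lemma singletonSum_succ_succ_eq_sum_first_ball (B N : ℕ) (y : ℝ) :
    singletonSum (B + 1) (N + 1) y = (B + 1) *
      ∑ k ∈ range (N + 1), N.choose k * singletonWeight y (k + 1) * singletonSum B (N - k) y := by
  have deriv_pow : d⁄dX ℝ (binEgf y ^ (B + 1)) =
      (B + 1 : ℝ) • (egf (fun k ↦ singletonWeight y (k + 1)) * binEgf y ^ B) := by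
    rw [derivative_pow, Nat.add_sub_cancel, ← derivative_egf, ← binEgf, smul_eq_C_mul]
    simp only [Nat.cast_add, Nat.cast_one, map_add, map_natCast, map_one]
    ring
  simp only [singletonSum_eq_coeff]
  rw [factorial_succ_mul_coeff_succ, deriv_pow, coeff_smul, smul_eq_mul, mul_left_comm,
    factorial_mul_coeff_egf_mul]

lemma singletonWeight_nonneg (hy : 0 ≤ y) (k : ℕ) : 0 ≤ singletonWeight y k := by
  unfold singletonWeight
  split_ifs <;> positivity

lemma singletonWeight_sub_succ (y : ℝ) (k : ℕ) :
    singletonWeight y k - singletonWeight y (k + 1) =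
      (1 - y) * ((if k = 0 then 1 else 0) - if k = 1 then 1 else 0) := by
  rcases k with _ | _ | k <;> simp [singletonWeight]

lemma succ_mul_singletonSum_sub (B N : ℕ) (y : ℝ) :
    (B + 1) * singletonSum (B + 1) N y - singletonSum (B + 1) (N + 1) y =
      (B + 1) * ((1 - y) * (singletonSum B N y - N * singletonSum B (N - 1) y)) := by
  have summand (k : ℕ) :
      N.choose k * singletonWeight y k * singletonSum B (N - k) y -
        N.choose k * singletonWeight y (k + 1) * singletonSum B (N - k) y =
      (1 - y) * ((if k = 0 then N.choose k * singletonSum B (N - k) y else 0) -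
        if k = 1 then N.choose k * singletonSum B (N - k) y else 0) := by
    rw [← sub_mul, ← mul_sub, singletonWeight_sub_succ]
    split_ifs <;> ring
  rw [singletonSum_succ_succ_eq_sum_first_ball, singletonSum_succ_eq_sum_first_bin, ← mul_sub,
    ← sum_sub_distrib, sum_congr rfl fun k _ ↦ summand k, ← mul_sum, sum_sub_distrib,
    sum_ite_eq', sum_ite_eq']
  cases N <;> simp

lemma hasDerivAt_singletonSum (B N : ℕ) (y : ℝ) :
    HasDerivAt (singletonSum (B + 1) (N + 1)) ((N + 1) * ((B + 1) * singletonSum B N y)) y := by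
  have hasDerivAt_binEgf (k : ℕ) : HasDerivAt (fun z ↦ coeff k (binEgf z)) (coeff k X) y := by
    simp only [binEgf, egf, coeff_mk, coeff_X, singletonWeight]
    split_ifs with hk
    · simpa [hk] using hasDerivAt_id' y
    · exact hasDerivAt_const y _
  have coeff_deriv : ((N + 1)! : ℝ) * coeff (N + 1) (((B : ℝ⟦X⟧) + 1) * (X * binEgf y ^ B)) =
      (N + 1) * ((B + 1) * singletonSum B N y) := by
    rw [mul_left_comm, coeff_succ_X_mul, ← Nat.cast_succ, ← map_natCast (C (R := ℝ)), coeff_C_mul,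
      singletonSum_eq_coeff, Nat.factorial_succ]
    push_cast
    ring
  rw [← coeff_deriv, funext (singletonSum_eq_coeff (B + 1) (N + 1))]
  exact (hasDerivAt_coeff_pow hasDerivAt_binEgf B (N + 1)).const_mul _

lemma singletonCount_cons_le {ι : Type*} [Fintype ι] [DecidableEq ι] {N : ℕ} (j : ι)
    (f : Fin N → ι) :
    singletonCount (Fin.cons j f : Fin (N + 1) → ι) ≤ singletonCount f + 1 := by
  refine (card_le_card fun i hi ↦ ?_).trans (card_insert_le j _)
  simp only [mem_insert, mem_filter_univ, Fin.card_filter_univ_succ, Fin.cons_zero, Fin.cons_succ]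
    at hi ⊢
  grind

lemma singletonCount_le_cons {ι : Type*} [Fintype ι] [DecidableEq ι] {N : ℕ} (j : ι)
    (f : Fin N → ι) :
    singletonCount f ≤ singletonCount (Fin.cons j f : Fin (N + 1) → ι) + 1 := by
  refine (card_le_card fun i hi ↦ ?_).trans (card_insert_le j _)
  simp only [mem_insert, mem_filter_univ, Fin.card_filter_univ_succ, Fin.cons_zero, Fin.cons_succ]
    at hi ⊢
  grind

lemma singletonSum_succ_right (B N : ℕ) (y : ℝ) :
    singletonSum B (N + 1) y =
      ∑ j : Fin B, ∑ f : Fin N → Fin B,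
        y ^ singletonCount (Fin.cons j f : Fin (N + 1) → Fin B) := by
  rw [singletonSum, ← (Fin.consEquiv fun _ ↦ Fin B).sum_comp, Fintype.sum_prod_type]
  rfl

lemma mul_singletonSum_le_succ (hy : 0 ≤ y) (hy1 : y ≤ 1) (B N : ℕ) :
    y * (B * singletonSum B N y) ≤ singletonSum B (N + 1) y := by
  calc y * (B * singletonSum B N y)
      = ∑ _j : Fin B, ∑ f : Fin N → Fin B, y ^ (singletonCount f + 1) := by
        simp only [singletonSum, pow_succ', ← mul_sum, sum_const, card_univ, Fintype.card_fin,
          nsmul_eq_mul]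
    _ ≤ singletonSum B (N + 1) y := by
        rw [singletonSum_succ_right]
        exact sum_le_sum fun j _ ↦ sum_le_sum fun f _ ↦
          pow_le_pow_of_le_one hy hy1 (singletonCount_cons_le j f)

lemma mul_singletonSum_succ_le (hy : 0 ≤ y) (hy1 : y ≤ 1) (B N : ℕ) :
    y * singletonSum B (N + 1) y ≤ B * singletonSum B N y := by
  calc y * singletonSum B (N + 1) y
      = ∑ j : Fin B, ∑ f : Fin N → Fin B,
          y ^ (singletonCount (Fin.cons j f : Fin (N + 1) → Fin B) + 1) := by
        simp only [singletonSum_succ_right, pow_succ', mul_sum]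
    _ ≤ ∑ _j : Fin B, ∑ f : Fin N → Fin B, y ^ singletonCount f :=
        sum_le_sum fun j _ ↦ sum_le_sum fun f _ ↦
          pow_le_pow_of_le_one hy hy1 (singletonCount_le_cons j f)
    _ = B * singletonSum B N y := by simp [singletonSum]

end SingletonSum

section BinomialTail

/-- The upper tail `∑_{k ≥ l} (n choose k) u ^ k` of the binomial expansion of `(1 + u) ^ n`. -/
def binomialTail (n : ℕ) (u : ℝ) (l : ℕ) : ℝ := ∑ k ∈ Ico l (n + 1), n.choose k * u ^ k

variable {u : ℝ}

lemma binomialTail_zero (n : ℕ) (u : ℝ) : binomialTail n u 0 = (1 + u) ^ n := by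
  rw [binomialTail, ← range_eq_Ico, add_comm 1 u, add_pow]
  exact sum_congr rfl fun k _ ↦ by ring

lemma binomialTail_self_succ (n : ℕ) (u : ℝ) : binomialTail n u (n + 1) = 0 := by
  simp [binomialTail]

lemma binomialTail_sub_succ {n l : ℕ} (hl : l ≤ n) (u : ℝ) :
    binomialTail n u l - binomialTail n u (l + 1) = n.choose l * u ^ l := by
  rw [binomialTail, binomialTail, sum_eq_sum_Ico_succ_bot (Nat.lt_succ_of_le hl),
    add_sub_cancel_right]

lemma binomialTail_one (n : ℕ) (u : ℝ) : binomialTail n u 1 = (1 + u) ^ n - 1 := by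
  have h := binomialTail_sub_succ n.zero_le u
  rw [binomialTail_zero, Nat.choose_zero_right, pow_zero, Nat.cast_one, mul_one] at h
  linarith

lemma binomialTail_nonneg (hu : 0 ≤ u) (n l : ℕ) : 0 ≤ binomialTail n u l :=
  sum_nonneg fun _ _ ↦ by positivity

lemma succ_mul_binomialTail_succ_le (hu : 0 ≤ u) (n l : ℕ) :
    (l + 1) * binomialTail n u (l + 1) ≤ (n - l : ℕ) * u * binomialTail n u l := by
  have term_le (k : ℕ) (hk : k ∈ Ico l n) :
      (l + 1) * (n.choose (k + 1) * u ^ (k + 1)) ≤ (n - l : ℕ) * u * (n.choose k * u ^ k) := by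
    have hlk : l ≤ k := (mem_Ico.1 hk).1
    have absorb : (n.choose (k + 1) * (k + 1) : ℝ) = n.choose k * (n - k : ℕ) :=
      mod_cast Nat.choose_succ_right_eq n k
    calc (l + 1) * (n.choose (k + 1) * u ^ (k + 1))
        ≤ (k + 1) * (n.choose (k + 1) * u ^ (k + 1)) := by gcongr
      _ = (n - k : ℕ) * u * (n.choose k * u ^ k) := by linear_combination u ^ (k + 1) * absorb
      _ ≤ (n - l : ℕ) * u * (n.choose k * u ^ k) := by gcongr
  calc (l + 1) * binomialTail n u (l + 1)
      = ∑ k ∈ Ico l n, (l + 1) * (n.choose (k + 1) * u ^ (k + 1)) := by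
        rw [binomialTail, ← sum_Ico_add' (fun k ↦ (n.choose k * u ^ k : ℝ)), mul_sum]
    _ ≤ ∑ k ∈ Ico l n, (n - l : ℕ) * u * (n.choose k * u ^ k) := sum_le_sum term_le
    _ ≤ (n - l : ℕ) * u * binomialTail n u l := by
        rw [← mul_sum, binomialTail]
        gcongr
        omega

lemma sum_range_succ_sub_mul_eq (S f : ℕ → ℝ) (n : ℕ) :
    ∑ k ∈ range (n + 1), (S k - S (k + 1)) * f k =
      S 0 * f 0 + ∑ i ∈ range n, S (i + 1) * (f (i + 1) - f i) - S (n + 1) * f n := by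
  induction n with
  | zero => rw [sum_range_one, sum_range_zero]; ring
  | succ n ih => rw [sum_range_succ, ih, sum_range_succ _ n]; ring

lemma sum_range_succ_mul_sub_le {S c d : ℕ → ℝ} (hS : ∀ i, 0 ≤ S i) (hc : ∀ i, 0 ≤ c i)
    (hd : ∀ i, 0 ≤ d i) (hSc : ∀ i, S (i + 1) ≤ c i / 2 * S i) (m : ℕ) :
    ∑ i ∈ range (m + 1), S i * (d i - c i * d (i + 1)) ≤
      S 0 * (d 0 - c 0 / 2 * d 1) - c m / 2 * S m * d (m + 1) := by
  induction m with
  | zero => exact le_of_eq <| by rw [sum_range_one]; ring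
  | succ m ih =>
    rw [sum_range_succ]
    have := mul_le_mul_of_nonneg_right (hSc m) (hd (m + 1))
    have := mul_nonneg (mul_nonneg (hc (m + 1)) (hS (m + 1))) (hd (m + 2))
    linarith

/-- Averaging `h (M + 1 - K)` over a binomial `K` exceeds `h (M + 1)` by a sum of differences of
`h` weighted by binomial tails; these tails decay so fast that the part of the sum not shown on the
right-hand side is nonpositive. -/
theorem sum_choose_mul_pow_mul_le {x : ℝ} {a h : ℕ → ℝ} (hu : 0 ≤ u) (hx : 0 ≤ x)
    (ha : ∀ m, 0 ≤ a m) (h_sub : ∀ m, h m - h (m + 1) = x * (a m - m * u * a (m - 1))) (M : ℕ) :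
    ∑ k ∈ range (M + 2), (M + 1).choose k * u ^ k * h (M + 1 - k) ≤
      (1 + u) ^ (M + 1) * h (M + 1) +
        x * (((1 + u) ^ (M + 1) - 1) * (a M - M * u / 2 * a (M - 1))) := by
  set S := binomialTail (M + 1) u with hS
  have tail_le (i : ℕ) : S (i + 2) ≤ (M - i : ℕ) * u / 2 * S (i + 1) := by
    have ratio := succ_mul_binomialTail_succ_le hu (M + 1) (i + 1)
    rw [Nat.add_sub_add_right, ← hS] at ratio
    push_cast at ratio
    have := mul_nonneg i.cast_nonneg (binomialTail_nonneg hu (M + 1) (i + 2))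
    linarith
  have h_sub_rev (i : ℕ) (hi : i ∈ range (M + 1)) :
      S (i + 1) * (h (M + 1 - (i + 1)) - h (M + 1 - i)) =
        x * (S (i + 1) * (a (M - i) - (M - i : ℕ) * u * a (M - (i + 1)))) := by
    rw [Nat.add_sub_add_right, Nat.succ_sub (mem_range_succ_iff.1 hi), h_sub, Nat.sub_sub]
    ring
  calc ∑ k ∈ range (M + 2), (M + 1).choose k * u ^ k * h (M + 1 - k)
      = ∑ k ∈ range (M + 2), (S k - S (k + 1)) * h (M + 1 - k) :=
        sum_congr rfl fun k hk ↦ by rw [hS, binomialTail_sub_succ (mem_range_succ_iff.1 hk)]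
    _ = (1 + u) ^ (M + 1) * h (M + 1) +
          x * ∑ i ∈ range (M + 1), S (i + 1) * (a (M - i) - (M - i : ℕ) * u * a (M - (i + 1))) := by
        rw [sum_range_succ_sub_mul_eq S (fun k ↦ h (M + 1 - k)), sum_congr rfl h_sub_rev,
          ← mul_sum, hS, binomialTail_zero, binomialTail_self_succ, zero_mul, sub_zero,
          Nat.sub_zero]
    _ ≤ _ := by
        have telescoped := sum_range_succ_mul_sub_le (S := fun i ↦ S (i + 1))
          (c := fun i ↦ (M - i : ℕ) * u) (d := fun i ↦ a (M - i))
          (fun i ↦ binomialTail_nonneg hu _ _) (fun i ↦ by positivity) (fun i ↦ ha _) tail_le M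
        simp only [Nat.sub_self, Nat.cast_zero, zero_mul, zero_div, sub_zero, Nat.sub_zero,
          zero_add, hS, binomialTail_one] at telescoped
        gcongr

lemma one_add_pow_le_exp (hu : 0 ≤ u) (n : ℕ) : (1 + u) ^ n ≤ Real.exp (n * u) := by
  rw [Real.exp_nat_mul, add_comm]
  gcongr
  exact Real.add_one_le_exp u

lemma one_add_pow_mul_sub_le_exp (hu : 0 ≤ u) (c : ℝ) (n : ℕ) :
    (1 + u) ^ n * (c - n * u) ≤ Real.exp (c - 1) := by
  calc (1 + u) ^ n * (c - n * u)
      ≤ (1 + u) ^ n * Real.exp (c - 1 - n * u) := by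
        gcongr
        linarith [Real.add_one_le_exp (c - 1 - n * u)]
    _ ≤ Real.exp (n * u) * Real.exp (c - 1 - n * u) := by
        gcongr
        exact one_add_pow_le_exp hu n
    _ = Real.exp (c - 1) := by rw [← Real.exp_add, add_sub_cancel]

lemma tail_mul_le_affine {y : ℝ} (hu : 0 ≤ u) (hu1 : u ≤ 1) (hy : 0 ≤ y) (hy1 : y ≤ 1) (m : ℕ) :
    ((1 + u) ^ (m + 1) - 1) * (1 - m * u / 2 * y) ≤
      (y + (1 + u) ^ (m + 1) * ((1 - y) / 2 + u * y)) * (1 + m * u) := by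
  set T := (1 + u) ^ (m + 1) with hT
  have at_zero : T * (1 - m * u) ≤ 2 := by
    have h := one_add_pow_mul_sub_le_exp hu 1 m
    rw [sub_self, Real.exp_zero] at h
    rw [hT, pow_succ']
    nlinarith
  have at_one : T * (2 - (m + 1) * u) ≤ 4 := by
    have h := one_add_pow_mul_sub_le_exp hu 2 (m + 1)
    push_cast at h
    rw [show (2 : ℝ) - 1 = 1 by norm_num] at h
    linarith [Real.exp_one_lt_d9]
  -- Both sides are affine in `y`, so it is enough to compare them at `y = 0` and `y = 1`.
  have at_zero' := mul_le_mul_of_nonneg_left at_zero (sub_nonneg.2 hy1)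
  have at_one' := mul_le_mul_of_nonneg_left at_one hy
  have : 0 ≤ y * (T * u + 2 * (T * u * (m * u)) + m * u) := by positivity
  linarith

end BinomialTail

section ProbabilityGeneratingFunction

/-- The probability generating function `E[y ^ I]` of the number `I` of singleton bins when `N`
balls are dropped uniformly into `B` bins. -/
noncomputable def singletonPGF (B N : ℕ) (y : ℝ) : ℝ := singletonSum B N y / B ^ N

/-- The expectation of `y ^ I` over the event that a given bin stays empty, where `I` is the number
of singleton bins when `N` balls are dropped uniformly into `B + 1` bins. -/
noncomputable def emptyBinPGF (B N : ℕ) (y : ℝ) : ℝ := singletonSum B N y / (B + 1) ^ N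

variable {y : ℝ}

lemma singletonPGF_nonneg (hy : 0 ≤ y) (B N : ℕ) : 0 ≤ singletonPGF B N y :=
  div_nonneg (singletonSum_nonneg hy B N) (by positivity)

lemma emptyBinPGF_nonneg (hy : 0 ≤ y) (B N : ℕ) : 0 ≤ emptyBinPGF B N y :=
  div_nonneg (singletonSum_nonneg hy B N) (by positivity)

lemma singletonPGF_sub_succ (B N : ℕ) (y : ℝ) :
    singletonPGF (B + 1) N y - singletonPGF (B + 1) (N + 1) y =
      (1 - y) * (emptyBinPGF B N y - N * (B + 1 : ℝ)⁻¹ * emptyBinPGF B (N - 1) y) := by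
  calc singletonPGF (B + 1) N y - singletonPGF (B + 1) (N + 1) y
      = ((B + 1) * singletonSum (B + 1) N y - singletonSum (B + 1) (N + 1) y) /
          (B + 1) ^ (N + 1) := by
        rw [singletonPGF, singletonPGF, Nat.cast_succ]
        field_simp
        ring
    _ = (1 - y) * (singletonSum B N y - N * singletonSum B (N - 1) y) / (B + 1) ^ N := by
        rw [succ_mul_singletonSum_sub]
        field_simp
        ring
    _ = (1 - y) * (emptyBinPGF B N y - N * (B + 1 : ℝ)⁻¹ * emptyBinPGF B (N - 1) y) := by
        rw [emptyBinPGF, emptyBinPGF]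
        cases N
        · simp
        · rw [Nat.add_sub_cancel]
          field_simp
          ring

lemma mul_emptyBinPGF_succ_le (hy : 0 ≤ y) (hy1 : y ≤ 1) (B N : ℕ) :
    y * emptyBinPGF B (N + 1) y ≤ emptyBinPGF B N y := by
  rw [emptyBinPGF, emptyBinPGF, pow_succ, ← mul_div_assoc, div_le_div_iff₀ (by positivity)
    (by positivity)]
  have := mul_singletonSum_succ_le hy hy1 B N
  have := singletonSum_nonneg hy B N
  calc y * singletonSum B (N + 1) y * (B + 1) ^ N
      ≤ ((B + 1) * singletonSum B N y) * (B + 1) ^ N :=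
        mul_le_mul_of_nonneg_right (by linarith) (by positivity)
    _ = singletonSum B N y * ((B + 1) ^ N * (B + 1)) := by ring

lemma mul_emptyBinPGF_le_succ (hy : 0 ≤ y) (hy1 : y ≤ 1) (B N : ℕ) :
    y * (1 - (B + 1 : ℝ)⁻¹) * emptyBinPGF B N y ≤ emptyBinPGF B (N + 1) y := by
  calc y * (1 - (B + 1 : ℝ)⁻¹) * emptyBinPGF B N y
      = y * (B * singletonSum B N y) / (B + 1) ^ (N + 1) := by
        rw [emptyBinPGF]
        field_simp
        ring
    _ ≤ emptyBinPGF B (N + 1) y := by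
        rw [emptyBinPGF]
        gcongr
        exact mul_singletonSum_le_succ hy hy1 B N

lemma emptyBinPGF_succ_add_le (hy : 0 ≤ y) (B N : ℕ) :
    emptyBinPGF B (N + 1) y + y * (N + 1) * (B + 1 : ℝ)⁻¹ * emptyBinPGF B N y ≤
      singletonPGF (B + 1) (N + 1) y := by
  calc emptyBinPGF B (N + 1) y + y * (N + 1) * (B + 1 : ℝ)⁻¹ * emptyBinPGF B N y
      = (singletonSum B (N + 1) y + (N + 1) * y * singletonSum B N y) / (B + 1) ^ (N + 1) := by
        rw [emptyBinPGF, emptyBinPGF]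
        field_simp
        ring
    _ = (∑ k ∈ range 2, (N + 1).choose k * singletonWeight y k *
          singletonSum B (N + 1 - k) y) / (B + 1) ^ (N + 1) := by
        simp [sum_range_succ, singletonWeight]
    _ ≤ singletonPGF (B + 1) (N + 1) y := by
        rw [singletonPGF, singletonSum_succ_eq_sum_first_bin, Nat.cast_succ]
        gcongr
        · intro k _ _
          have := singletonWeight_nonneg hy k
          have := singletonSum_nonneg hy B (N + 1 - k)
          positivity
        · omega

lemma mul_emptyBinPGF_le_singletonPGF_succ (hy : 0 ≤ y) (hy1 : y ≤ 1) (B N : ℕ) :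
    y * (1 + N * (B + 1 : ℝ)⁻¹) * emptyBinPGF B N y ≤ singletonPGF (B + 1) (N + 1) y := by
  linarith [mul_emptyBinPGF_le_succ hy hy1 B N, emptyBinPGF_succ_add_le hy B N]

lemma singletonPGF_succ_succ_mul_pow (B N : ℕ) (y : ℝ) :
    singletonPGF (B + 2) (N + 1) y * (1 + (B + 1 : ℝ)⁻¹) ^ N =
      ∑ k ∈ range (N + 1), N.choose k * (B + 1 : ℝ)⁻¹ ^ k * singletonPGF (B + 1) (N - k) y -
        (1 - y) * singletonPGF (B + 1) N y := by
  have summand (k : ℕ) (hk : k ∈ range (N + 1)) :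
      N.choose k * singletonWeight y (k + 1) * singletonSum (B + 1) (N - k) y / (B + 1) ^ N =
        N.choose k * (B + 1 : ℝ)⁻¹ ^ k * singletonPGF (B + 1) (N - k) y -
          if k = 0 then (1 - y) * singletonPGF (B + 1) N y else 0 := by
    obtain ⟨r, rfl⟩ := Nat.exists_eq_add_of_le (mem_range_succ_iff.1 hk)
    rw [Nat.add_sub_cancel_left]
    rcases k with _ | k
    · simp only [zero_add, Nat.choose_zero_right, Nat.cast_one, singletonWeight, ↓reduceIte,
        one_mul, pow_zero, mul_one, singletonPGF, Nat.cast_add]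
      ring
    · simp only [singletonWeight, Nat.add_eq_right, Nat.add_eq_zero_iff, one_ne_zero, and_false,
        ↓reduceIte, mul_one, pow_add, pow_one, inv_pow, singletonPGF, Nat.cast_add, Nat.cast_one,
        sub_zero]
      field_simp
  have one_add_inv : 1 + (B + 1 : ℝ)⁻¹ = (B + 2) / (B + 1) := by
    field_simp
    ring
  calc singletonPGF (B + 2) (N + 1) y * (1 + (B + 1 : ℝ)⁻¹) ^ N
      = (∑ k ∈ range (N + 1), N.choose k * singletonWeight y (k + 1) *
          singletonSum (B + 1) (N - k) y) / (B + 1) ^ N := by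
        rw [singletonPGF, singletonSum_succ_succ_eq_sum_first_ball, one_add_inv, div_pow]
        push_cast
        field_simp
        ring
    _ = _ := by
        rw [sum_div, sum_congr rfl summand, sum_sub_distrib, sum_ite_eq', if_pos (by simp)]

lemma mul_tail_mul_emptyBinPGF_sub_le (hy : 0 ≤ y) (hy1 : y ≤ 1) (B N : ℕ) :
    y * (((1 + (B + 1 : ℝ)⁻¹) ^ (N + 1) - 1) *
        (emptyBinPGF B N y - N * (B + 1 : ℝ)⁻¹ / 2 * emptyBinPGF B (N - 1) y)) ≤
      (y + (1 + (B + 1 : ℝ)⁻¹) ^ (N + 1) * ((1 - y) / 2 + (B + 1 : ℝ)⁻¹ * y)) *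
        singletonPGF (B + 1) (N + 1) y := by
  have le_singletonPGF := mul_emptyBinPGF_le_singletonPGF_succ hy hy1 B N
  set u := (B + 1 : ℝ)⁻¹
  have hu : 0 ≤ u := by positivity
  have hu1 : u ≤ 1 := inv_le_one_of_one_le₀ (by linarith [B.cast_nonneg (α := ℝ)])
  set T := (1 + u) ^ (N + 1)
  set a := emptyBinPGF B N y
  have ha : 0 ≤ a := emptyBinPGF_nonneg hy B N
  have hT : 0 ≤ T - 1 := sub_nonneg.2 (one_le_pow₀ (by linarith))
  have := sub_nonneg.2 hy1
  have pred_ge : N * u / 2 * (y * a) ≤ N * u / 2 * emptyBinPGF B (N - 1) y := by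
    rcases N with _ | N
    · simp
    · gcongr
      exact mul_emptyBinPGF_succ_le hy hy1 B N
  calc y * ((T - 1) * (a - N * u / 2 * emptyBinPGF B (N - 1) y))
      ≤ y * ((T - 1) * (a - N * u / 2 * (y * a))) := by gcongr
    _ = y * a * ((T - 1) * (1 - N * u / 2 * y)) := by ring
    _ ≤ y * a * ((y + T * ((1 - y) / 2 + u * y)) * (1 + N * u)) :=
        mul_le_mul_of_nonneg_left (tail_mul_le_affine hu hu1 hy hy1 N) (mul_nonneg hy ha)
    _ = (y + T * ((1 - y) / 2 + u * y)) * (y * (1 + N * u) * a) := by ring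
    _ ≤ (y + T * ((1 - y) / 2 + u * y)) * singletonPGF (B + 1) (N + 1) y :=
        mul_le_mul_of_nonneg_left le_singletonPGF (by positivity)

lemma hasDerivAt_singletonPGF (B N : ℕ) (y : ℝ) :
    HasDerivAt (singletonPGF (B + 1) (N + 1)) ((N + 1) * emptyBinPGF B N y) y := by
  refine ((hasDerivAt_singletonSum B N y).div_const _).congr_deriv ?_
  rw [emptyBinPGF, Nat.cast_succ]
  field_simp
  ring

lemma singletonPGF_eq_pow_mul_emptyBinPGF (B N : ℕ) (y : ℝ) :
    singletonPGF (B + 1) N y = (1 + (B + 1 : ℝ)⁻¹) ^ N * emptyBinPGF (B + 1) N y := by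
  have one_add_inv : 1 + (B + 1 : ℝ)⁻¹ = (B + 1 + 1) / (B + 1) := by field_simp
  rw [singletonPGF, emptyBinPGF, one_add_inv, div_pow, Nat.cast_succ]
  field_simp

theorem two_mul_singletonPGF_succ_succ_le (hy : 0 ≤ y) (hy1 : y ≤ 1) (B N : ℕ) :
    2 * y * singletonPGF (B + 2) (N + 1) y ≤
      (1 + (B + 1 : ℝ)⁻¹) * (1 + y ^ 2) * singletonPGF (B + 1) N y := by
  have recurrence := singletonPGF_succ_succ_mul_pow B N y
  have hu : 0 ≤ (B + 1 : ℝ)⁻¹ := by positivity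
  have hpgf : 0 ≤ singletonPGF (B + 1) N y := singletonPGF_nonneg hy _ _
  rcases N with _ | N
  · have pgf_one : singletonPGF (B + 2) (0 + 1) y = y * singletonPGF (B + 1) 0 y := by
      simp only [zero_add, pow_zero, mul_one, range_one, zero_tsub, sum_singleton,
        Nat.choose_self, Nat.cast_one, one_mul] at recurrence ⊢
      linarith
    rw [pgf_one, ← mul_assoc]
    exact mul_le_mul_of_nonneg_right (by nlinarith [mul_nonneg hu (sq_nonneg y)]) hpgf
  have sum_le := sum_choose_mul_pow_mul_le hu (sub_nonneg.2 hy1)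
    (emptyBinPGF_nonneg hy B) (singletonPGF_sub_succ B · y) N
  have tail_le := mul_tail_mul_emptyBinPGF_sub_le hy hy1 B N
  set u := (B + 1 : ℝ)⁻¹
  set T := (1 + u) ^ (N + 1)
  set h := singletonPGF (B + 1) (N + 1) y
  set d := (T - 1) * (emptyBinPGF B N y - N * u / 2 * emptyBinPGF B (N - 1) y)
  have hT : 0 < T := by positivity
  refine le_of_mul_le_mul_right ?_ hT
  calc 2 * y * singletonPGF (B + 2) (N + 1 + 1) y * T
      ≤ 2 * y * (T * h + (1 - y) * d - (1 - y) * h) := by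
        rw [mul_assoc, recurrence]
        gcongr
    _ ≤ 2 * y * (T * h) + 2 * (1 - y) * ((y + T * ((1 - y) / 2 + u * y)) * h) -
          2 * y * ((1 - y) * h) := by
        linarith [mul_le_mul_of_nonneg_left tail_le (sub_nonneg.2 hy1)]
    _ = (1 + y ^ 2 + u * (2 * y * (1 - y))) * h * T := by ring
    _ ≤ (1 + u) * (1 + y ^ 2) * h * T := by
        gcongr
        nlinarith [mul_nonneg hu (sq_nonneg y), mul_nonneg hu (sq_nonneg (1 - y))]

end ProbabilityGeneratingFunction

section Concentration

lemma le_mul_exp_sub_of_hasDerivAt {f f' g g' : ℝ → ℝ} {a b : ℝ} (hab : a ≤ b)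
    (hf : ∀ t, HasDerivAt f (f' t) t) (hg : ∀ t, HasDerivAt g (g' t) t)
    (h_le : ∀ t, a ≤ t → f' t ≤ -g' t * f t) :
    f b ≤ f a * Real.exp (g a - g b) := by
  have hasDerivAt_mul_exp (t : ℝ) : HasDerivAt (fun t ↦ f t * Real.exp (g t))
      ((f' t + g' t * f t) * Real.exp (g t)) t :=
    ((hf t).mul (hg t).exp).congr_deriv (by ring)
  have antitone : AntitoneOn (fun t ↦ f t * Real.exp (g t)) (Set.Ici a) := by
    refine antitoneOn_of_hasDerivWithinAt_nonpos (convex_Ici a)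
      (fun t _ ↦ (hasDerivAt_mul_exp t).continuousAt.continuousWithinAt)
      (fun t _ ↦ (hasDerivAt_mul_exp t).hasDerivWithinAt) fun t ht ↦ ?_
    have hat : a ≤ t := interior_subset ht
    exact mul_nonpos_of_nonpos_of_nonneg (by linarith [h_le t hat]) (Real.exp_nonneg _)
  rw [Real.exp_sub, ← mul_div_assoc, le_div_iff₀ (Real.exp_pos _)]
  exact antitone Set.self_mem_Ici hab hab

lemma card_filter_lt_le_exp_mul_sum {Ω : Type*} [Fintype Ω] (X : Ω → ℝ) (c : ℝ) {t : ℝ}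
    (ht : 0 ≤ t) :
    (#{ω | X ω < c} : ℝ) ≤ Real.exp (t * c) * ∑ ω, Real.exp (-t * X ω) := by
  calc (#{ω | X ω < c} : ℝ)
      = ∑ ω with X ω < c, 1 := by simp
    _ ≤ ∑ ω with X ω < c, Real.exp (t * (c - X ω)) := sum_le_sum fun ω hω ↦
        Real.one_le_exp <| mul_nonneg ht <| sub_nonneg.2 (mem_filter_univ _ |>.1 hω).le
    _ ≤ ∑ ω, Real.exp (t * (c - X ω)) :=
        sum_le_univ_sum_of_nonneg fun ω ↦ (Real.exp_pos _).le
    _ = Real.exp (t * c) * ∑ ω, Real.exp (-t * X ω) := by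
        rw [mul_sum]
        exact sum_congr rfl fun ω _ ↦ by rw [← Real.exp_add]; ring_nf

lemma singletonPGF_exp_neg_le {t : ℝ} (ht : 0 ≤ t) (B N : ℕ) :
    singletonPGF (B + 2) (N + 1) (Real.exp (-t)) ≤
      Real.exp ((N + 1) * (B + 1 : ℝ)⁻¹) * Real.cosh t *
        emptyBinPGF (B + 1) N (Real.exp (-t)) := by
  set y := Real.exp (-t) with hy_def
  have hy : 0 < y := Real.exp_pos _
  have hy1 : y ≤ 1 := Real.exp_le_one_iff.2 (neg_nonpos.2 ht)
  have cosh_eq : 2 * y * Real.cosh t = 1 + y ^ 2 := by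
    rw [Real.cosh_eq, hy_def, sq, mul_comm 2, mul_assoc, mul_div_cancel₀ _ two_ne_zero, mul_add,
      ← Real.exp_add, neg_add_cancel, Real.exp_zero]
  have hu : 0 ≤ (B + 1 : ℝ)⁻¹ := by positivity
  have ha : 0 ≤ emptyBinPGF (B + 1) N y := emptyBinPGF_nonneg hy.le _ _
  refine le_of_mul_le_mul_left ?_ (mul_pos two_pos hy)
  calc 2 * y * singletonPGF (B + 2) (N + 1) y
      ≤ (1 + (B + 1 : ℝ)⁻¹) * (1 + y ^ 2) * singletonPGF (B + 1) N y :=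
        two_mul_singletonPGF_succ_succ_le hy.le hy1 B N
    _ = (1 + (B + 1 : ℝ)⁻¹) ^ (N + 1) * (1 + y ^ 2) * emptyBinPGF (B + 1) N y := by
        rw [singletonPGF_eq_pow_mul_emptyBinPGF]
        ring
    _ ≤ Real.exp ((N + 1 : ℕ) * (B + 1 : ℝ)⁻¹) * (1 + y ^ 2) * emptyBinPGF (B + 1) N y := by
        gcongr
        exact one_add_pow_le_exp hu (N + 1)
    _ = 2 * y * (Real.exp ((N + 1) * (B + 1 : ℝ)⁻¹) * Real.cosh t *
          emptyBinPGF (B + 1) N y) := by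
        rw [← cosh_eq, Nat.cast_succ]
        ring

lemma hasDerivAt_singletonPGF_exp_neg (B N : ℕ) (t : ℝ) :
    HasDerivAt (fun t ↦ singletonPGF (B + 1) (N + 1) (Real.exp (-t)))
      (-((N + 1) * emptyBinPGF B N (Real.exp (-t)) * Real.exp (-t))) t :=
  ((hasDerivAt_singletonPGF B N _).comp t (hasDerivAt_neg' t).exp).congr_deriv (by ring)

lemma mul_singletonPGF_exp_neg_le {t : ℝ} (ht : 0 ≤ t) (B N : ℕ) :
    (N + 1) / Real.exp ((N + 1) * (B + 1 : ℝ)⁻¹) * (1 - Real.sinh t / Real.cosh t) *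
        singletonPGF (B + 2) (N + 1) (Real.exp (-t)) ≤
      (N + 1) * emptyBinPGF (B + 1) N (Real.exp (-t)) * Real.exp (-t) := by
  have hcosh := Real.cosh_pos t
  rw [one_sub_div hcosh.ne', Real.cosh_sub_sinh]
  set E := Real.exp ((N + 1) * (B + 1 : ℝ)⁻¹)
  have hE_pos : 0 < E := Real.exp_pos _
  calc (N + 1) / E * (Real.exp (-t) / Real.cosh t) *
        singletonPGF (B + 2) (N + 1) (Real.exp (-t))
      ≤ (N + 1) / E * (Real.exp (-t) / Real.cosh t) *
          (E * Real.cosh t * emptyBinPGF (B + 1) N (Real.exp (-t))) := by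
        gcongr
        exact singletonPGF_exp_neg_le ht B N
    _ = (N + 1) * emptyBinPGF (B + 1) N (Real.exp (-t)) * Real.exp (-t) := by field_simp

theorem singletonPGF_exp_neg_le_exp {t : ℝ} (ht : 0 ≤ t) (B N : ℕ) :
    singletonPGF (B + 2) N (Real.exp (-t)) ≤
      Real.exp (-(N / Real.exp (N * (B + 1 : ℝ)⁻¹) * (t - t ^ 2 / 2))) := by
  rcases N with _ | N
  · simp [singletonPGF, singletonSum, singletonCount]
  rw [Nat.cast_succ]
  set μ := (N + 1) / Real.exp ((N + 1) * (B + 1 : ℝ)⁻¹)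
  have hasDerivAt_rate (s : ℝ) : HasDerivAt (fun s ↦ μ * (s - Real.log (Real.cosh s)))
      (μ * (1 - Real.sinh s / Real.cosh s)) s :=
    ((hasDerivAt_id' s).sub ((Real.hasDerivAt_cosh s).log (Real.cosh_pos s).ne')).const_mul μ
  have deriv_le (s : ℝ) (hs : 0 ≤ s) :
      -((N + 1) * emptyBinPGF (B + 1) N (Real.exp (-s)) * Real.exp (-s)) ≤
        -(μ * (1 - Real.sinh s / Real.cosh s)) * singletonPGF (B + 2) (N + 1) (Real.exp (-s)) := by
    rw [neg_mul]
    exact neg_le_neg (mul_singletonPGF_exp_neg_le hs B N)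
  have log_cosh_le : Real.log (Real.cosh t) ≤ t ^ 2 / 2 :=
    (Real.log_le_iff_le_exp (Real.cosh_pos t)).2 (Real.cosh_le_exp_half_sq t)
  have pgf_one : singletonPGF (B + 2) (N + 1) 1 = 1 := by
    rw [singletonPGF, singletonSum_one, div_self (by positivity)]
  calc singletonPGF (B + 2) (N + 1) (Real.exp (-t))
      ≤ singletonPGF (B + 2) (N + 1) (Real.exp (-0)) *
          Real.exp (μ * (0 - Real.log (Real.cosh 0)) - μ * (t - Real.log (Real.cosh t))) :=
        le_mul_exp_sub_of_hasDerivAt ht (hasDerivAt_singletonPGF_exp_neg (B + 1) N)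
          hasDerivAt_rate deriv_le
    _ = Real.exp (-(μ * (t - Real.log (Real.cosh t)))) := by simp [pgf_one]
    _ ≤ Real.exp (-(μ * (t - t ^ 2 / 2))) := by gcongr

lemma one_sub_exp_mul_singletonPGF_le {B : ℕ} (hB : B ≠ 0) (N : ℕ) (c : ℝ) {t : ℝ} (ht : 0 ≤ t) :
    1 - Real.exp (t * c) * singletonPGF B N (Real.exp (-t)) ≤
      (#{f : Fin N → Fin B | c ≤ (singletonCount f : ℝ)} : ℝ) / B ^ N := by
  have card_add : (#{f : Fin N → Fin B | c ≤ (singletonCount f : ℝ)} : ℝ) +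
      #{f : Fin N → Fin B | (singletonCount f : ℝ) < c} = B ^ N := by
    simp only [← not_le]
    exact_mod_cast (card_filter_add_card_filter_not _).trans (by simp)
  have chernoff : (#{f : Fin N → Fin B | (singletonCount f : ℝ) < c} : ℝ) / B ^ N ≤
      Real.exp (t * c) * singletonPGF B N (Real.exp (-t)) :=
    calc (#{f : Fin N → Fin B | (singletonCount f : ℝ) < c} : ℝ) / B ^ N
        ≤ Real.exp (t * c) * (∑ f : Fin N → Fin B, Real.exp (-t * singletonCount f)) / B ^ N := by
          gcongr
          exact card_filter_lt_le_exp_mul_sum _ c ht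
      _ = Real.exp (t * c) * singletonPGF B N (Real.exp (-t)) := by
          simp only [singletonPGF, singletonSum, ← Real.exp_nat_mul, mul_comm, mul_div_assoc]
  rw [eq_sub_of_add_eq card_add, sub_div, div_self (by positivity)]
  exact sub_le_sub_left chernoff 1

end Concentration

theorem singletons_lower_concentration_general (N B : ℕ) (hB : 2 ≤ B) (ε : ℝ) (hε : 0 ≤ ε) :
    1 - Real.exp (-(ε ^ 2 * N) / (2 * Real.exp ((N : ℝ) / ((B : ℝ) - 1)))) ≤
      (#{f : Fin N → Fin B | (1 - ε) * N / Real.exp ((N : ℝ) / ((B : ℝ) - 1)) ≤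
        (singletonCount f : ℝ)} : ℝ) / B ^ N := by
  obtain ⟨B, rfl⟩ := Nat.exists_eq_add_of_le' hB
  have sub_one : ((B + 2 : ℕ) : ℝ) - 1 = B + 1 := by
    push_cast
    ring
  rw [sub_one, div_eq_mul_inv (N : ℝ)]
  set E := Real.exp (N * (B + 1 : ℝ)⁻¹)
  calc 1 - Real.exp (-(ε ^ 2 * N) / (2 * E))
      = 1 - Real.exp (ε * ((1 - ε) * N / E)) * Real.exp (-(N / E * (ε - ε ^ 2 / 2))) := by
        rw [← Real.exp_add]
        congr 2
        field_simp
        ring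
    _ ≤ 1 - Real.exp (ε * ((1 - ε) * N / E)) * singletonPGF (B + 2) N (Real.exp (-ε)) := by
        gcongr
        exact singletonPGF_exp_neg_le_exp hε B N
    _ ≤ _ := one_sub_exp_mul_singletonPGF_le (by omega) N _ hε

/-- Drop `N` balls uniformly at random into `B` bins where `B ≥ N + √N` or
`B ≤ N - √N` (with `N ≥ 1`, `B ≥ 2`).  For any `0 < ε < 1`, with probability at
least `1 - exp(-ε²·N/(2·e^{N/(B-1)}))` the number of singleton bins is at least
`(1-ε)·N / e^{N/(B-1)}`. -/
theorem singletons_lower_concentration (N B : ℕ) (hN : 1 ≤ N) (hB : 2 ≤ B)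
    (hyp : (B : ℝ) ≥ N + Real.sqrt N ∨ (B : ℝ) ≤ N - Real.sqrt N)
    (ε : ℝ) (hε0 : 0 < ε) (hε1 : ε < 1) :
    ((Finset.univ.filter (fun f : Fin N → Fin B =>
        (1 - ε) * N / Real.exp ((N : ℝ) / ((B : ℝ) - 1)) ≤
          ((Finset.univ.filter (fun j : Fin B =>
            (Finset.univ.filter (fun i : Fin N => f i = j)).card = 1)).card : ℝ))).card : ℝ)
        / B ^ N ≥
      1 - Real.exp (-(ε ^ 2 * N) / (2 * Real.exp ((N : ℝ) / ((B : ℝ) - 1)))) :=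
  singletons_lower_concentration_general N B hB ε hε0.le
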